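/- Let V be a 3-dimensional vector space over an algebraically closed field k with basis {x_0, x_1, x_2} indexed by Z/3, and let q ∈ k^×. Define c: V ⊗ V → V ⊗ V by c(x_i ⊗ x_j) = q · x_{−i−j} ⊗ x_i. Then c satisfies the braid equation (c ⊗ id)(id ⊗ c)(c ⊗ id) = (id ⊗ c)(c ⊗ id)(id ⊗ c) on V ⊗ V ⊗ V, and c³ = q³ · id as an endomorphism of V ⊗ V. -/

import Mathlib

open TensorProduct

/-! The endomorphism `x_a ⊗ x_b ↦ q • x_{a ◃ b} ⊗ x_a` attached to a binary operation `◃` satisfies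
the braid equation as soon as `◃` is left self-distributive: both sides send `x_a ⊗ x_b ⊗ x_d` to
`q ^ 3 • x_{a ◃ (b ◃ d)} ⊗ x_{a ◃ b} ⊗ x_a`, the left one with its first index written as
`(a ◃ b) ◃ (a ◃ d)`. If moreover `(a ◃ b) ◃ a = b` for all `a`, `b`, then iterating the map on
`x_a ⊗ x_b` gives the index pairs `(a, b)`, `(a ◃ b, a)`, `(b, a ◃ b)`, `(a, b)`, so its cube is
`q ^ 3`. On `ℤ/3` the operation `-i - j = 2 * i - j` is that of the dihedral quandle. -/

section Braiding

variable {R V X : Type*} [CommSemiring R] [AddCommMonoid V] [Module R V]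

/-- The operator `c ⊗ id` of the braid equation on `V ⊗ V ⊗ V`, for `c` an endomorphism of `V ⊗ V`.
Triple tensor products are bracketed to the right, hence the conjugation by the associator. -/
def leftBraidOperator (c : V ⊗[R] V →ₗ[R] V ⊗[R] V) :
    V ⊗[R] (V ⊗[R] V) →ₗ[R] V ⊗[R] (V ⊗[R] V) :=
  (TensorProduct.assoc R V V V).toLinearMap ∘ₗ TensorProduct.map c LinearMap.id ∘ₗ
    (TensorProduct.assoc R V V V).symm.toLinearMap

/-- The operator `id ⊗ c` of the braid equation on `V ⊗ V ⊗ V`, for `c` an endomorphism of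
`V ⊗ V`. -/
def rightBraidOperator (c : V ⊗[R] V →ₗ[R] V ⊗[R] V) :
    V ⊗[R] (V ⊗[R] V) →ₗ[R] V ⊗[R] (V ⊗[R] V) :=
  TensorProduct.map LinearMap.id c

/-- The braid equation `(c ⊗ id)(id ⊗ c)(c ⊗ id) = (id ⊗ c)(c ⊗ id)(id ⊗ c)` for an endomorphism
`c` of `V ⊗ V`, which is not required to be invertible. -/
def SatisfiesBraidEquation (c : V ⊗[R] V →ₗ[R] V ⊗[R] V) : Prop :=
  leftBraidOperator c ∘ₗ rightBraidOperator c ∘ₗ leftBraidOperator c =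
    rightBraidOperator c ∘ₗ leftBraidOperator c ∘ₗ rightBraidOperator c

/-- `c` is the linearization, with scalar weight `q`, of the map `(x, y) ↦ (op x y, x)` on pairs of
indices of the family `v`. -/
def LinearizesOperation (v : X → V) (q : R) (op : X → X → X)
    (c : V ⊗[R] V →ₗ[R] V ⊗[R] V) : Prop :=
  ∀ x y, c (v x ⊗ₜ[R] v y) = q • (v (op x y) ⊗ₜ[R] v x)

namespace LinearizesOperation

variable {v : X → V} {b : Module.Basis X R V} {q : R} {op : X → X → X}
  {c : V ⊗[R] V →ₗ[R] V ⊗[R] V}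

theorem leftBraidOperator_tmul (hc : LinearizesOperation v q op c) (x y : X) (w : V) :
    leftBraidOperator c (v x ⊗ₜ[R] (v y ⊗ₜ[R] w)) =
      q • (v (op x y) ⊗ₜ[R] (v x ⊗ₜ[R] w)) := by
  simp only [leftBraidOperator, LinearMap.comp_apply, LinearEquiv.coe_coe, assoc_symm_tmul,
    map_tmul, LinearMap.id_apply, hc x y, ← smul_tmul', map_smul, assoc_tmul]

theorem rightBraidOperator_tmul (hc : LinearizesOperation v q op c) (w : V) (x y : X) :
    rightBraidOperator c (w ⊗ₜ[R] (v x ⊗ₜ[R] v y)) =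
      q • (w ⊗ₜ[R] (v (op x y) ⊗ₜ[R] v x)) := by
  simp only [rightBraidOperator, map_tmul, LinearMap.id_apply, hc x y, tmul_smul]

theorem satisfiesBraidEquation [Shelf X] (hc : LinearizesOperation b q Shelf.act c) :
    SatisfiesBraidEquation c := by
  refine (b.tensorProduct (b.tensorProduct b)).ext fun ⟨x, y, z⟩ ↦ ?_
  simp only [Module.Basis.tensorProduct_apply, LinearMap.comp_apply, map_smul,
    hc.leftBraidOperator_tmul, hc.rightBraidOperator_tmul, ← Shelf.self_distrib]

theorem comp_comp_eq_smul_id (hc : LinearizesOperation b q op c)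
    (hop : ∀ x y, op (op x y) x = y) : c ∘ₗ c ∘ₗ c = q ^ 3 • LinearMap.id := by
  have hop' (x y : X) : op y (op x y) = x := by
    simpa only [hop x y] using hop (op x y) x
  refine (b.tensorProduct b).ext fun ⟨x, y⟩ ↦ ?_
  calc (c ∘ₗ c ∘ₗ c) (b.tensorProduct b (x, y))
      = c (c (c (b x ⊗ₜ[R] b y))) := by
        simp only [Module.Basis.tensorProduct_apply, LinearMap.comp_apply]
    _ = q • c (c (b (op x y) ⊗ₜ[R] b x)) := by simp only [hc x y, map_smul]
    _ = q • q • c (b y ⊗ₜ[R] b (op x y)) := by simp only [hc (op x y) x, hop, map_smul]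
    _ = q • q • q • (b x ⊗ₜ[R] b y) := by rw [hc y (op x y), hop']
    _ = (q ^ 3 • LinearMap.id) (b.tensorProduct b (x, y)) := by
        simp only [Module.Basis.tensorProduct_apply, LinearMap.smul_apply, LinearMap.id_apply,
          smul_smul, pow_three]

end LinearizesOperation

theorem stmt12_general [Shelf X] (hact : ∀ x y : X, Shelf.act (Shelf.act x y) x = y)
    (b : Module.Basis X R V) (q : R) (c : V ⊗[R] V →ₗ[R] V ⊗[R] V)
    (hc : LinearizesOperation b q Shelf.act c) :
    SatisfiesBraidEquation c ∧ c ∘ₗ c ∘ₗ c = q ^ 3 • LinearMap.id :=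
  ⟨hc.satisfiesBraidEquation, hc.comp_comp_eq_smul_id hact⟩

end Braiding

theorem dihedralAct_three (i j : ZMod 3) : Quandle.dihedralAct 3 i j = -i - j := by
  have two_eq_neg_one : (2 : ZMod 3) = -1 := rfl
  rw [Quandle.dihedralAct, two_eq_neg_one, neg_one_mul]

theorem dihedralAct_three_act_self (i j : ZMod 3) :
    Quandle.dihedralAct 3 (Quandle.dihedralAct 3 i j) i = j := by
  simp only [dihedralAct_three, neg_sub, sub_neg_eq_add, add_sub_cancel_right]

theorem linearizesOperation_dihedralAct_three_iff {R : Type*} [CommSemiring R] {q : R}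
    {c : (ZMod 3 → R) ⊗[R] (ZMod 3 → R) →ₗ[R] (ZMod 3 → R) ⊗[R] (ZMod 3 → R)} :
    LinearizesOperation (Pi.basisFun R (ZMod 3)) q (Quandle.dihedralAct 3) c ↔
      ∀ i j : ZMod 3, c (Pi.single i 1 ⊗ₜ[R] Pi.single j 1) =
        q • (Pi.single (-i - j) 1 ⊗ₜ[R] Pi.single i 1) := by
  simp only [LinearizesOperation, Pi.basisFun_apply, dihedralAct_three]

/-- Let `V` be the 3-dimensional vector space with basis `x_0, x_1, x_2` indexed by
`ℤ/3` (here `V = ZMod 3 → k`, `x_i = Pi.single i 1`), `q ∈ kˣ`, and let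
`c : V ⊗ V → V ⊗ V` be the linear map with `c(x_i ⊗ x_j) = q · x_{−i−j} ⊗ x_i`. Then `c`
satisfies the braid equation on `V ⊗ V ⊗ V` and `c³ = q³ · id`. -/
theorem stmt12 {k : Type*} [Field k] (q : k) (hq : q ≠ 0)
    (c : ((ZMod 3 → k) ⊗[k] (ZMod 3 → k)) →ₗ[k] ((ZMod 3 → k) ⊗[k] (ZMod 3 → k)))
    (hc : ∀ i j : ZMod 3,
      c ((Pi.single i 1 : ZMod 3 → k) ⊗ₜ[k] (Pi.single j 1 : ZMod 3 → k))
        = q • ((Pi.single (-i - j) 1 : ZMod 3 → k) ⊗ₜ[k] (Pi.single i 1 : ZMod 3 → k))) :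
    (((TensorProduct.assoc k (ZMod 3 → k) (ZMod 3 → k) (ZMod 3 → k)).toLinearMap ∘ₗ
          TensorProduct.map c LinearMap.id ∘ₗ
          (TensorProduct.assoc k (ZMod 3 → k) (ZMod 3 → k) (ZMod 3 → k)).symm.toLinearMap) ∘ₗ
        (TensorProduct.map LinearMap.id c) ∘ₗ
        ((TensorProduct.assoc k (ZMod 3 → k) (ZMod 3 → k) (ZMod 3 → k)).toLinearMap ∘ₗ
          TensorProduct.map c LinearMap.id ∘ₗ
          (TensorProduct.assoc k (ZMod 3 → k) (ZMod 3 → k) (ZMod 3 → k)).symm.toLinearMap)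
      = (TensorProduct.map LinearMap.id c) ∘ₗ
        ((TensorProduct.assoc k (ZMod 3 → k) (ZMod 3 → k) (ZMod 3 → k)).toLinearMap ∘ₗ
          TensorProduct.map c LinearMap.id ∘ₗ
          (TensorProduct.assoc k (ZMod 3 → k) (ZMod 3 → k) (ZMod 3 → k)).symm.toLinearMap) ∘ₗ
        (TensorProduct.map LinearMap.id c)) ∧
    c ∘ₗ c ∘ₗ c
      = q ^ 3 • (LinearMap.id :
          ((ZMod 3 → k) ⊗[k] (ZMod 3 → k)) →ₗ[k] ((ZMod 3 → k) ⊗[k] (ZMod 3 → k))) :=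
  stmt12_general (X := Quandle.Dihedral 3) dihedralAct_three_act_self (Pi.basisFun k (ZMod 3)) q c
    (linearizesOperation_dihedralAct_three_iff.2 hc)
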